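/- For every k ≥ 0, every graph G ∈ D̂_k has at least k+2 vertices of degree exactly k+1. -/

import Mathlib

open SimpleGraph

/-- The degree of a vertex in a finite simple graph. -/
noncomputable def degC {V : Type} [Fintype V] (G : SimpleGraph V) (v : V) : ℕ := by
  classical exact G.degree v

/-- The minimum degree of a finite simple graph. -/
noncomputable def minDegC {V : Type} [Fintype V] (G : SimpleGraph V) : ℕ := by
  classical exact G.minDegree

/-- `H` is a minor of `G`: there is a family of nonempty, pairwise disjoint,
connected branch sets, one for each vertex of `H`, such that every edge of `H`
is realised by an edge of `G` between the corresponding branch sets. -/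
def IsMinorOf {W V : Type} (H : SimpleGraph W) (G : SimpleGraph V) : Prop :=
  ∃ B : W → Set V,
    (∀ w, (B w).Nonempty) ∧
    (∀ u w : W, u ≠ w → Disjoint (B u) (B w)) ∧
    (∀ w, (G.induce (B w)).Connected) ∧
    (∀ ⦃u w : W⦄, H.Adj u w → ∃ a ∈ B u, ∃ b ∈ B w, G.Adj a b)

/-- `H` is a proper minor of `G`: a minor that is not isomorphic to `G`. -/
def IsProperMinorOf {W V : Type} (H : SimpleGraph W) (G : SimpleGraph V) : Prop :=
  IsMinorOf H G ∧ ¬ Nonempty (H ≃g G)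

/-- `G ∈ D_k`: every minor of `G` has minimum degree at most `k`. -/
def MemD (k : ℕ) {V : Type} (G : SimpleGraph V) : Prop :=
  ∀ (W : Type) [Fintype W] (H : SimpleGraph W), IsMinorOf H G → minDegC H ≤ k

/-- `G ∈ D̂_k`: `G ∉ D_k` but every proper minor of `G` is in `D_k`. -/
def MemDHat (k : ℕ) {V : Type} (G : SimpleGraph V) : Prop :=
  ¬ MemD k G ∧ ∀ (W : Type) [Fintype W] (H : SimpleGraph W), IsProperMinorOf H G → MemD k H

/-- A spanning subgraph is a minor. -/
theorem IsMinorOf.of_le {V : Type} {H G : SimpleGraph V} (h : H ≤ G) : IsMinorOf H G := by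
  refine ⟨fun v => {v}, fun v => Set.singleton_nonempty v, fun u w huw => ?_, fun w => ?_,
    fun u w huw => ⟨u, rfl, w, rfl, h huw⟩⟩
  · simpa using huw
  · have : Nonempty ({w} : Set V) := ⟨⟨w, rfl⟩⟩
    exact ⟨Preconnected.of_subsingleton⟩

theorem MemD.minDegC_le {k : ℕ} {V : Type} [Fintype V] {G : SimpleGraph V} (h : MemD k G) :
    minDegC G ≤ k :=
  h V G (IsMinorOf.of_le le_rfl)

theorem minDegC_eq_of_iso {V W : Type} [Fintype V] [Fintype W] {G : SimpleGraph V}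
    {H : SimpleGraph W} (e : H ≃g G) : minDegC H = minDegC G := by
  classical
  simpa [minDegC] using e.minDegree_eq

/-- A graph in `D̂_k` has minimum degree at least `k + 1`. -/
theorem MemDHat.lt_minDegC {k : ℕ} {V : Type} [Fintype V] {G : SimpleGraph V}
    (hG : MemDHat k G) : k < minDegC G := by
  obtain ⟨hnot, hproper⟩ := hG
  by_contra hk
  refine hnot fun W _ H hH => ?_
  by_cases hiso : Nonempty (H ≃g G)
  · exact (minDegC_eq_of_iso hiso.some).trans_le (not_lt.mp hk)
  · exact (hproper W H ⟨hH, hiso⟩).minDegC_le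

theorem MemDHat.lt_degC {k : ℕ} {V : Type} [Fintype V] {G : SimpleGraph V}
    (hG : MemDHat k G) (v : V) : k < degC G v := by
  classical
  exact hG.lt_minDegC.trans_le (by simpa [minDegC, degC] using G.minDegree_le_degree v)

/-- A proper spanning subgraph of a finite graph is not isomorphic to it. -/
theorem not_nonempty_iso_of_lt {V : Type} [Fintype V] {H G : SimpleGraph V} (h : H < G) :
    ¬ Nonempty (H ≃g G) := by
  classical
  rintro ⟨e⟩
  exact (Finset.card_lt_card (edgeFinset_ssubset_edgeFinset.mpr h)).ne e.card_edgeFinset_eq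

/-- In a graph in `D̂_k` every edge has an end of degree `k + 1`. -/
theorem MemDHat.degC_eq_or_degC_eq_of_adj {k : ℕ} {V : Type} [Fintype V] {G : SimpleGraph V}
    (hG : MemDHat k G) {u v : V} (huv : G.Adj u v) :
    degC G u = k + 1 ∨ degC G v = k + 1 := by
  classical
  by_contra! hhigh
  have hlt : G.deleteEdges {s(u, v)} < G := by
    refine lt_of_le_of_ne (G.deleteEdges_le _) fun heq => ?_
    rw [← heq] at huv
    simp at huv
  have hmin := (hG.2 V _ ⟨IsMinorOf.of_le hlt.le, not_nonempty_iso_of_lt hlt⟩).minDegC_le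
  have : Nonempty V := ⟨u⟩
  obtain ⟨x, hx⟩ := (G.deleteEdges {s(u, v)}).exists_minimal_degree_vertex
  have hdeg : (G.deleteEdges {s(u, v)}).degree x ≤ k := by
    rw [← hx]
    simp only [minDegC] at hmin
    convert hmin
  have hlow : ∀ y, (∀ w, G.Adj x w → w = y ∨ (G.deleteEdges {s(u, v)}).Adj x w) →
      degC G x ≤ k + 1 := fun y hy => by
    have hsub : G.neighborFinset x ⊆ insert y ((G.deleteEdges {s(u, v)}).neighborFinset x) :=
      fun w hw => by
        rw [Finset.mem_insert, mem_neighborFinset]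
        exact hy w ((G.mem_neighborFinset x w).mp hw)
    have hcard := (Finset.card_le_card hsub).trans (Finset.card_insert_le _ _)
    simp only [card_neighborFinset_eq_degree] at hcard
    simp only [degC]
    exact hcard.trans (Nat.succ_le_succ hdeg)
  have hx_lt := hG.lt_degC x
  by_cases hxu : x = u
  · subst hxu
    refine hhigh.1 (le_antisymm (hlow v fun w hw => ?_) hx_lt)
    by_cases hwv : w = v
    · exact Or.inl hwv
    · right
      grind [deleteEdges_adj]
  by_cases hxv : x = v
  · subst hxv
    refine hhigh.2 (le_antisymm (hlow u fun w hw => ?_) hx_lt)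
    by_cases hwu : w = u
    · exact Or.inl hwu
    · right
      grind [deleteEdges_adj]
  · have hle : G.degree x ≤ (G.deleteEdges {s(u, v)}).degree x := by
      refine Finset.card_le_card fun w hw => ?_
      rw [mem_neighborFinset] at hw ⊢
      simp [deleteEdges_adj, hw, hxu, hxv]
    simp only [degC] at hx_lt
    exact (hle.trans hdeg).not_gt hx_lt

/-- Proposition 4.1: every graph in `D̂_k` has at least `k+2` vertices of
degree exactly `k+1`. -/
theorem memDHat_many_low_degree_vertices (k : ℕ) {V : Type} [Fintype V]
    (G : SimpleGraph V) (hG : MemDHat k G) :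
    k + 2 ≤ {v : V | degC G v = k + 1}.ncard := by
  classical
  have hcard : ∀ v : V, (G.neighborSet v).ncard = degC G v := fun v => by
    rw [← coe_neighborFinset, Set.ncard_coe_finset, card_neighborFinset_eq_degree]
    simp only [degC]
  by_cases hhigh : ∃ v, degC G v ≠ k + 1
  · obtain ⟨v, hv⟩ := hhigh
    have hsub : G.neighborSet v ⊆ {w | degC G w = k + 1} := fun w hw =>
      (hG.degC_eq_or_degC_eq_of_adj hw).resolve_left hv
    have hle := Set.ncard_le_ncard hsub
    have hlt := hG.lt_degC v
    rw [hcard] at hle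
    omega
  · push Not at hhigh
    have hne : Nonempty V := by
      by_contra hempty
      rw [not_nonempty_iff] at hempty
      have := hG.lt_minDegC
      simp [minDegC] at this
    obtain ⟨v⟩ := hne
    have huniv : {w : V | degC G w = k + 1} = Set.univ := Set.eq_univ_of_forall hhigh
    have hdeg := hhigh v
    have hlt := G.degree_lt_card_verts v
    rw [huniv, Set.ncard_univ, Nat.card_eq_fintype_card]
    rw [← hcard, ← coe_neighborFinset, Set.ncard_coe_finset, card_neighborFinset_eq_degree] at hdeg
    omega
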